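/- (Symplectic analogue, strengthening of Chattopadhyay–Rao.) Let R be a commutative ring with 1, n ≥ 2, and let φ be an invertible alternating 2n×2n matrix over R, written in block form φ = [[0, −c], [cᵗ, μ]] with c ∈ R^{2n−1} a row vector and μ a (2n−1)×(2n−1) matrix, and write φ⁻¹ = [[0, d], [−dᵗ, ρ]] with d ∈ R^{2n−1} a row vector and ρ a (2n−1)×(2n−1) matrix. For v ∈ R^{2n−1} (a row vector) define α(v) = I_{2n−1} + dᵗ·v·μ and β(v) = I_{2n−1} − ρ·vᵗ·c. Then α(v) and β(v) are invertible for all v, and the subgroup of GL_{2n−1}(R) generated by {α(v) : v ∈ R^{2n−1}} ∪ {β(v) : v ∈ R^{2n−1}} coincides with the elementary linear group E_{2n−1}(R). -/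

import Mathlib

open Matrix

/-- `Emat N i j a` is the elementary matrix `E_{i,j}(a) = I_N + a·e_{ij}`,
where `i, j` are 1-based indices and `e_{ij}` is the matrix unit. -/
def Emat (R : Type*) [Ring R] (N i j : ℕ) (a : R) : Matrix (Fin N) (Fin N) R :=
  1 + Matrix.of (fun r c : Fin N => if r.val + 1 = i ∧ c.val + 1 = j then a else 0)

/-- The elementary linear group `E_N(R)`: the subgroup of `GL_N(R)` generated by all
elementary matrices `E_{i,j}(a)` with `1 ≤ i ≠ j ≤ N`, `a ∈ R`. -/
def elemGroup (N : ℕ) (R : Type*) [Ring R] : Subgroup (Matrix (Fin N) (Fin N) R)ˣ :=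
  Subgroup.closure { M : (Matrix (Fin N) (Fin N) R)ˣ |
    ∃ (i j : ℕ) (a : R), 1 ≤ i ∧ i ≤ N ∧ 1 ≤ j ∧ j ≤ N ∧ i ≠ j ∧
      M.val = Emat R N i j a }

/-- 1-based access to the entries of a vector `v ∈ R^N` (0 outside the range). -/
def vecEntry {R : Type*} [Ring R] {N : ℕ} (v : Fin N → R) (i : ℕ) : R :=
  if h : 1 ≤ i ∧ i ≤ N then v ⟨i - 1, by omega⟩ else 0

/-- 1-based access to the entries of an `n × n` matrix (0 outside the range). -/
def matEntry {R : Type*} [Ring R] {n : ℕ} (φ : Matrix (Fin n) (Fin n) R) (i j : ℕ) : R :=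
  if h : 1 ≤ i ∧ i ≤ n ∧ 1 ≤ j ∧ j ≤ n then φ ⟨i - 1, by omega⟩ ⟨j - 1, by omega⟩ else 0

/-- The matrix `θ(v)` of size `N = n + 2m - 1`: it agrees with the identity matrix except
in the first row, where (in 1-based indices, with `c` the column index)
`θ(v)_{1,2k} = σ(a_{2k+1})` and `θ(v)_{1,2k+1} = -σ(1)⁻¹·σ(a_{2k})` for `1 ≤ k ≤ m-1`, and
`θ(v)_{1,2m-1+k} = -σ(1)⁻¹·(Σ_{j=1}^{n} σ(a_{2m-1+j})·φ_{jk})` for `1 ≤ k ≤ n`. -/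
noncomputable def theta {R : Type*} [Ring R] (σ : R → R) (m n : ℕ)
    (φ : Matrix (Fin n) (Fin n) R) (v : Fin (n + 2*m - 1) → R) :
    Matrix (Fin (n + 2*m - 1)) (Fin (n + 2*m - 1)) R :=
  Matrix.of fun i j =>
    if i.val = 0 then
      (if j.val + 1 = 1 then 1
       else if j.val + 1 ≤ 2*m - 1 then
         (if (j.val + 1) % 2 = 0 then σ (vecEntry v (j.val + 2))
          else -(Ring.inverse (σ 1)) * σ (vecEntry v j.val))
       else -(Ring.inverse (σ 1)) *
         ∑ l ∈ Finset.Icc 1 n,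
           σ (vecEntry v (2*m - 1 + l)) * matEntry φ l (j.val + 1 - (2*m - 1)))
    else if i = j then 1 else 0

/-- The matrix `η(v)` of size `N = n + 2m - 1`: it agrees with the identity matrix except
in the first column, where (in 1-based indices, with `r` the row index)
`η(v)_{2k,1} = σ(1)⁻²·σ(a_{2k+1})` and `η(v)_{2k+1,1} = -σ(1)⁻¹·σ(a_{2k})` for `1 ≤ k ≤ m-1`,
and `η(v)_{2m-1+k,1} = -σ(1)⁻¹·(Σ_{j=1}^{n} σ(a_{2m-1+j})·ψ_{kj})` for `1 ≤ k ≤ n`,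
where `ψ` is (meant to be) `φ⁻¹`. -/
noncomputable def eta {R : Type*} [Ring R] (σ : R → R) (m n : ℕ)
    (ψ : Matrix (Fin n) (Fin n) R) (v : Fin (n + 2*m - 1) → R) :
    Matrix (Fin (n + 2*m - 1)) (Fin (n + 2*m - 1)) R :=
  Matrix.of fun i j =>
    if j.val = 0 then
      (if i.val + 1 = 1 then 1
       else if i.val + 1 ≤ 2*m - 1 then
         (if (i.val + 1) % 2 = 0 then (Ring.inverse (σ 1))^2 * σ (vecEntry v (i.val + 2))
          else -(Ring.inverse (σ 1)) * σ (vecEntry v i.val))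
       else -(Ring.inverse (σ 1)) *
         ∑ l ∈ Finset.Icc 1 n,
           σ (vecEntry v (2*m - 1 + l)) * matEntry ψ (i.val + 1 - (2*m - 1)) l)
    else if i = j then 1 else 0

section helpers

set_option linter.unusedSectionVars false

variable {ι R : Type*} [Fintype ι] [DecidableEq ι] [CommRing R]

/-- The transvection `1 + x y`. -/
def Tv (x y : ι → R) : Matrix ι ι R := 1 + vecMulVec x y

theorem Tv_transpose (x y : ι → R) : (Tv x y)ᵀ = Tv y x := by
  ext i j
  simp [Tv, vecMulVec_apply, Matrix.one_apply, mul_comm, eq_comm]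

theorem vmv_mul (x y z w : ι → R) :
    vecMulVec x y * vecMulVec z w = (y ⬝ᵥ z) • vecMulVec x w := by
  rw [vecMulVec_mul_vecMulVec]
  ext i j
  simp [vecMulVec_apply, mul_comm, mul_left_comm]

theorem Tv_mul_left (x x' y : ι → R) (h : y ⬝ᵥ x' = 0) :
    Tv x y * Tv x' y = Tv (x + x') y := by
  simp only [Tv, mul_add, add_mul, one_mul, mul_one, vmv_mul, h, zero_smul, add_vecMulVec]
  abel

theorem Tv_mul_right (x y y' : ι → R) (h : y ⬝ᵥ x = 0) :
    Tv x y * Tv x y' = Tv x (y + y') := by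
  simp only [Tv, mul_add, add_mul, one_mul, mul_one, vmv_mul, h, zero_smul, vecMulVec_add]
  abel

theorem Tv_smul (a : R) (x y : ι → R) : Tv (a • x) y = Tv x (a • y) := by
  simp [Tv, smul_vecMulVec, vecMulVec_smul]

theorem Tv_neg (x y : ι → R) : Tv (-x) y = Tv x (-y) := by
  simp [Tv, neg_vecMulVec, vecMulVec_neg]

theorem Tv_isUnit (x y : ι → R) (h : y ⬝ᵥ x = 0) : IsUnit (Tv x y) := by
  have h1 : Tv x y * Tv (-x) y = 1 := by
    rw [Tv_mul_left _ _ _ (by simp [h])]; simp [Tv]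
  exact IsUnit.of_mul_eq_one _ h1

theorem Tv_comm (x z w y : ι → R) (h1 : y ⬝ᵥ x = 0) (h2 : z ⬝ᵥ x = 0) (h3 : y ⬝ᵥ w = 0) :
    Tv x z * Tv w y * (Tv (-x) z * Tv (-w) y) = Tv x ((z ⬝ᵥ w) • y) := by
  simp only [Tv, mul_add, add_mul, one_mul, mul_one, vmv_mul, h1, h2, h3, zero_smul,
    neg_vecMulVec, mul_neg, neg_mul, vecMulVec_smul, smul_mul_assoc, mul_smul_comm, smul_zero]
  abel_nf

variable (S : Submonoid (Matrix ι ι R))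

theorem comm_mem (x z w y : ι → R) (h1 : y ⬝ᵥ x = 0) (h2 : z ⬝ᵥ x = 0) (h3 : y ⬝ᵥ w = 0)
    (m1 : Tv x z ∈ S) (m2 : Tv (-x) z ∈ S) (m3 : Tv w y ∈ S) (m4 : Tv (-w) y ∈ S) :
    Tv x ((z ⬝ᵥ w) • y) ∈ S := by
  rw [← Tv_comm x z w y h1 h2 h3]
  exact S.mul_mem (S.mul_mem m1 m3) (S.mul_mem m2 m4)

theorem sum_left_mem {κ : Type*} (s : Finset κ) (X : κ → ι → R) (y : ι → R)
    (h : ∀ k ∈ s, y ⬝ᵥ X k = 0) (m : ∀ k ∈ s, Tv (X k) y ∈ S) :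
    Tv (∑ k ∈ s, X k) y ∈ S := by
  classical
  induction s using Finset.induction_on with
  | empty => simp [Tv]
  | insert a s ha ih =>
    rw [Finset.sum_insert ha, add_comm, ← Tv_mul_left _ _ _ (h a (by simp))]
    exact S.mul_mem (ih (fun k hk => h k (by simp [hk])) (fun k hk => m k (by simp [hk])))
      (m a (by simp))

/-- the transposed submonoid -/
def trS : Submonoid (Matrix ι ι R) where
  carrier := {M | Mᵀ ∈ S}
  one_mem' := by simp
  mul_mem' := by
    intro a b ha hb
    simp only [Set.mem_ofPred_eq, transpose_mul] at *
    exact S.mul_mem hb ha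

theorem mem_trS (x y : ι → R) : Tv x y ∈ trS S ↔ Tv y x ∈ S := by
  change (Tv x y)ᵀ ∈ S ↔ _
  rw [Tv_transpose]

theorem sum_right_mem {κ : Type*} (s : Finset κ) (x : ι → R) (Y : κ → ι → R)
    (h : ∀ k ∈ s, Y k ⬝ᵥ x = 0) (m : ∀ k ∈ s, Tv x (Y k) ∈ S) :
    Tv x (∑ k ∈ s, Y k) ∈ S := by
  rw [← mem_trS]
  refine sum_left_mem _ s Y x (fun k hk => ?_) (fun k hk => ?_)
  · rw [dotProduct_comm]; exact h k hk
  · rw [mem_trS]; exact m k hk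

/-- all elementary matrices are in `S` -/
def HasElem : Prop := ∀ (i j : ι) (a : R), i ≠ j → Tv (Pi.single i a) (Pi.single j 1) ∈ S

theorem Tv_single (i j : ι) (a b : R) :
    Tv (Pi.single i a) (Pi.single j b) = Tv (Pi.single i (a * b)) (Pi.single j 1) := by
  have : (Pi.single j b : ι → R) = b • Pi.single j 1 := by
    rw [← Pi.single_smul]; simp
  rw [this, ← Tv_smul, ← Pi.single_smul, smul_eq_mul, mul_comm]

variable {S}

theorem HasElem.mem (hS : HasElem S) (i j : ι) (a b : R) (h : i ≠ j) :
    Tv (Pi.single i a) (Pi.single j b) ∈ S := by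
  rw [Tv_single]; exact hS _ _ _ h

theorem HasElem.tr (hS : HasElem S) : HasElem (trS S) := by
  intro i j a h
  rw [mem_trS]; exact hS.mem _ _ _ _ h.symm

theorem koszul_mem (h3 : ∀ i j : ι, ∃ k, k ≠ i ∧ k ≠ j) (hS : HasElem S)
    (x : ι → R) (i j : ι) (hij : i ≠ j) (a : R) :
    Tv x (Pi.single i (a * x j) - Pi.single j (a * x i)) ∈ S := by
  obtain ⟨k, hki, hkj⟩ := h3 i j
  set y : ι → R := Pi.single i (a * x j) - Pi.single j (a * x i) with hy
  have hyl : ∀ l, l ≠ i → l ≠ j → ∀ b, y ⬝ᵥ Pi.single l b = 0 := by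
    intro l h1 h2 b
    simp [hy, h1, h2]
  have my : ∀ l, l ≠ i → l ≠ j → ∀ b, Tv (Pi.single l b) y ∈ S := by
    intro l h1 h2 b
    rw [hy, sub_eq_add_neg, ← Tv_mul_right _ _ _ (by simp [h1]), ← Pi.single_neg]
    exact S.mul_mem (hS.mem _ _ _ _ h1) (hS.mem _ _ _ _ h2)
  have mx : ∀ b b', Tv (Pi.single i b + Pi.single j b') (Pi.single k 1) ∈ S := by
    intro b b'
    rw [← Tv_mul_left _ _ _ (by simp [hkj])]
    exact S.mul_mem (hS.mem _ _ _ _ hki.symm) (hS.mem _ _ _ _ hkj.symm)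
  have hyx : y ⬝ᵥ (Pi.single i (x i) + Pi.single j (x j)) = 0 := by
    simp [hy, dotProduct_add, hij, hij.symm]; ring
  have m1 : Tv (Pi.single i (x i) + Pi.single j (x j)) y ∈ S := by
    have := comm_mem S (Pi.single i (x i) + Pi.single j (x j)) (Pi.single k 1) (Pi.single k 1) y
      hyx (by simp [hki, hkj]) (hyl k hki hkj 1) (mx _ _)
      (by rw [neg_add, ← Pi.single_neg, ← Pi.single_neg]; exact mx _ _) (my k hki hkj 1)
      (by rw [← Pi.single_neg]; exact my k hki hkj _)
    simpa using this
  have m2 : Tv (∑ l ∈ Finset.univ \ {i, j}, Pi.single l (x l)) y ∈ S := by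
    refine sum_left_mem S _ _ _ (fun l hl => ?_) (fun l hl => ?_)
    · simp at hl; exact hyl l (by tauto) (by tauto) _
    · simp at hl; exact my l (by tauto) (by tauto) _
  have m3 := S.mul_mem m2 m1
  rw [Tv_mul_left _ _ _ hyx] at m3
  have e : ∑ l ∈ Finset.univ \ {i, j}, Pi.single l (x l) +
      (Pi.single i (x i) + Pi.single j (x j)) = x := by
    rw [← Finset.sum_pair (f := fun l => (Pi.single l (x l) : ι → R)) hij,
      Finset.sum_sdiff (Finset.subset_univ _)]
    exact Finset.univ_sum_single x
  rwa [e] at m3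

theorem unimod_mem (h3 : ∀ i j : ι, ∃ k, k ≠ i ∧ k ≠ j) (hS : HasElem S)
    (x y z : ι → R) (hyx : y ⬝ᵥ x = 0) (hzx : z ⬝ᵥ x = 1) : Tv x y ∈ S := by
  have e : y = ∑ p : ι × ι, ((Pi.single p.1 (y p.1 * z p.2 * x p.2) : ι → R)
      - Pi.single p.2 (y p.1 * z p.2 * x p.1)) := by
    ext l
    rw [Finset.sum_apply, Fintype.sum_prod_type]
    simp only [Pi.sub_apply, Finset.sum_sub_distrib]
    rw [Finset.sum_comm]
    simp only [Pi.single_apply, Finset.sum_ite_eq, Finset.mem_univ, if_true]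
    have h1 : ∑ j, y l * z j * x j = y l := by
      have : ∑ j, y l * z j * x j = y l * (z ⬝ᵥ x) := by
        simp [dotProduct, Finset.mul_sum, mul_assoc]
      rw [this, hzx, mul_one]
    have h2 : ∑ i, y i * z l * x i = 0 := by
      have : ∑ i, y i * z l * x i = z l * (y ⬝ᵥ x) := by
        simp only [dotProduct, Finset.mul_sum]
        exact Finset.sum_congr rfl (fun _ _ => by ring)
      rw [this, hyx, mul_zero]
    rw [h1, h2, sub_zero]
  rw [e]
  refine sum_right_mem S _ _ _ (fun p _ => ?_) (fun p _ => ?_)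
  · simp [sub_dotProduct]; ring
  · by_cases h : p.1 = p.2
    · rw [h]; simp [Tv]
    · exact koszul_mem h3 hS x p.1 p.2 h (y p.1 * z p.2)

theorem unimod_mem' (h3 : ∀ i j : ι, ∃ k, k ≠ i ∧ k ≠ j) (hS : HasElem S)
    (x y z : ι → R) (hyx : y ⬝ᵥ x = 0) (hzy : z ⬝ᵥ y = 1) : Tv x y ∈ S := by
  rw [← mem_trS]
  exact unimod_mem h3 hS.tr y x z (by rwa [dotProduct_comm]) hzy

/-- The set of transvections attached to the splitting given by `c d`. -/
structure HasSplit (S : Submonoid (Matrix ι ι R)) (c d : ι → R) : Prop where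
  cd : c ⬝ᵥ d = 1
  left : ∀ f, f ⬝ᵥ d = 0 → Tv d f ∈ S
  right : ∀ p, c ⬝ᵥ p = 0 → Tv p c ∈ S

variable {c d : ι → R}

theorem HasSplit.tr (h : HasSplit S c d) : HasSplit (trS S) d c where
  cd := by rw [dotProduct_comm]; exact h.cd
  left f hf := by rw [mem_trS]; exact h.right f (by rwa [dotProduct_comm])
  right f hf := by rw [mem_trS]; exact h.left f (by rwa [dotProduct_comm])

theorem HasSplit.mem_P (h : HasSplit S c d) (x y : ι → R) (hx : c ⬝ᵥ x = 0) (hyx : y ⬝ᵥ x = 0) :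
    Tv x y ∈ S := by
  have hf : (y - (y ⬝ᵥ d) • c) ⬝ᵥ d = 0 := by simp [sub_dotProduct, h.cd]
  have hfx : (y - (y ⬝ᵥ d) • c) ⬝ᵥ x = 0 := by simp [sub_dotProduct, hx, hyx]
  have m1 := comm_mem S x c d (y - (y ⬝ᵥ d) • c) hfx hx hf (h.right _ hx)
    (h.right _ (by simp [hx])) (h.left _ hf)
    (by rw [Tv_neg]; exact h.left _ (by rw [neg_dotProduct, hf, neg_zero]))
  rw [h.cd, one_smul] at m1
  have m2 : Tv x ((y ⬝ᵥ d) • c) ∈ S := by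
    rw [← Tv_smul]; exact h.right _ (by simp [hx])
  have m3 := S.mul_mem m1 m2
  rwa [Tv_mul_right _ _ _ hfx, sub_add_cancel] at m3

theorem HasSplit.mem_Q (h : HasSplit S c d) (x y : ι → R) (hy : y ⬝ᵥ d = 0) (hyx : y ⬝ᵥ x = 0) :
    Tv x y ∈ S := by
  rw [← mem_trS]
  exact h.tr.mem_P y x (by rwa [dotProduct_comm]) (by rwa [dotProduct_comm])

theorem HasSplit.step (h3 : ∀ i j : ι, ∃ k, k ≠ i ∧ k ≠ j) (h : HasSplit S c d)
    (i j : ι) (hij : i ≠ j) (b : R) :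
    Tv (Pi.single i 1) (Pi.single j (b * c i)) ∈ S := by
  obtain ⟨k, hki, hkj⟩ := h3 i j
  set p : ι → ι → R := fun l => Pi.single l (c i) - Pi.single i (c l) with hp
  have hcp : ∀ l, c ⬝ᵥ p l = 0 := by
    intro l; simp [hp, dotProduct_sub]; ring
  have hpj : ∀ l, l ≠ j → p l j = 0 := by
    intro l hl; simp [hp, hl.symm, hij.symm]
  set Q : ι → R := ∑ l ∈ Finset.univ \ {i, j}, d l • p l with hQ
  have hcQ : c ⬝ᵥ Q = 0 := by
    rw [hQ, dotProduct_sum]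
    exact Finset.sum_eq_zero (fun l _ => by simp [hcp])
  have hQj : Q j = 0 := by
    rw [hQ, Finset.sum_apply]
    refine Finset.sum_eq_zero (fun l hl => ?_)
    simp at hl
    simp [hpj l (by tauto)]
  have hQk : Q k = d k * c i := by
    rw [hQ, Finset.sum_apply, Finset.sum_eq_single k]
    · simp [hp, hki]
    · intro l _ hl; simp [hp, hki, hl.symm]
    · intro hk; simp [hki, hkj] at hk
  set x : ι → R := Pi.single i 1 + Q with hx
  set f : ι → R := Pi.single k 1 - d k • c with hf
  have hfd : f ⬝ᵥ d = 0 := by simp [hf, sub_dotProduct, h.cd]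
  have hfx : f ⬝ᵥ x = 0 := by
    simp [hf, hx, sub_dotProduct, dotProduct_add, hcQ, hQk, hki]
  have hjx : (Pi.single j 1 : ι → R) ⬝ᵥ x = 0 := by
    simp [hx, dotProduct_add, hQj, hij.symm]
  have hjp : (Pi.single j 1 : ι → R) ⬝ᵥ (b • p k) = 0 := by
    simp [hpj k hkj]
  have hcp' : c ⬝ᵥ (b • p k) = 0 := by simp [hcp]
  have hfp : f ⬝ᵥ (b • p k) = b * c i := by
    simp only [hf, sub_dotProduct, smul_dotProduct, hcp']
    simp [hp, hki]
  have m1 := comm_mem S x f (b • p k) (Pi.single j 1) hjx hfx hjp (h.mem_Q _ _ hfd hfx)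
    (h.mem_Q _ _ hfd (by simp [hfx])) (h.mem_P _ _ hcp' hjp)
    (h.mem_P _ _ (by rw [dotProduct_neg, hcp', neg_zero]) (by rw [dotProduct_neg, hjp, neg_zero]))
  rw [hfp, ← Pi.single_smul, smul_eq_mul, mul_one] at m1
  have hq : (Pi.single j (b * c i) : ι → R) ⬝ᵥ (-Q) = 0 := by simp [hQj]
  have m2 : Tv (-Q) (Pi.single j (b * c i)) ∈ S :=
    h.mem_P _ _ (by rw [dotProduct_neg, hcQ, neg_zero]) hq
  have m3 := S.mul_mem m1 m2
  rwa [Tv_mul_left _ _ _ hq, hx, add_neg_cancel_right] at m3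

theorem HasSplit.hasElem (h3 : ∀ i j : ι, ∃ k, k ≠ i ∧ k ≠ j) (h : HasSplit S c d) :
    HasElem S := by
  intro i j a hij
  have s1 : ∀ i j : ι, i ≠ j → ∀ b, Tv (Pi.single i (b * c i)) (Pi.single j 1) ∈ S := by
    intro i j hij b
    have := h.step h3 i j hij b
    rwa [Tv_single, one_mul] at this
  have s2 : ∀ i j : ι, i ≠ j → ∀ b, Tv (Pi.single i (b * d j)) (Pi.single j 1) ∈ S := by
    intro i j hij b
    have := h.tr.step h3 j i hij.symm b
    rwa [mem_trS] at this
  have e : (Pi.single i a : ι → R) = ∑ k, Pi.single i (a * (c k * d k)) := by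
    have : a = ∑ k, a * (c k * d k) := by
      rw [← Finset.mul_sum]
      change a = a * (c ⬝ᵥ d)
      rw [h.cd, mul_one]
    ext l
    rw [Finset.sum_apply]
    by_cases hl : l = i
    · subst hl; simpa using this
    · simp [hl]
  rw [e]
  refine sum_left_mem S _ _ _ (fun k _ => by simp [hij]) (fun k _ => ?_)
  by_cases hki : k = i
  · subst hki
    have := s1 k j hij (a * d k)
    rwa [mul_assoc, mul_comm (d k)] at this
  by_cases hkj : k = j
  · subst hkj
    have := s2 i k hij (a * c k)
    rwa [mul_assoc] at this
  have s3 : ∀ b, Tv (Pi.single i (b * d k)) (Pi.single k 1) ∈ S := s2 i k (Ne.symm hki)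
  have s4 : ∀ b, Tv (Pi.single k (b * c k)) (Pi.single j 1) ∈ S := s1 k j hkj
  have m := comm_mem S (Pi.single i (1 * d k)) (Pi.single k 1) (Pi.single k (a * c k))
    (Pi.single j 1) (by simp [hij]) (by simp [hki]) (by simp [hkj]) (s3 _)
    (by rw [← Pi.single_neg, ← neg_mul]; exact s3 _) (s4 _)
    (by rw [← Pi.single_neg, ← neg_mul]; exact s4 _)
  rw [← Tv_smul, ← Pi.single_smul] at m
  have e2 : ((Pi.single k 1 : ι → R) ⬝ᵥ Pi.single k (a * c k)) • (1 * d k)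
      = a * (c k * d k) := by
    simp [mul_assoc]
  rwa [e2] at m

/-- matrices underlying a subgroup of the unit group -/
def subS (G : Subgroup (Matrix ι ι R)ˣ) : Submonoid (Matrix ι ι R) :=
  G.toSubmonoid.map (Units.coeHom _)

theorem mem_subS (G : Subgroup (Matrix ι ι R)ˣ) (M : (Matrix ι ι R)ˣ) :
    M.val ∈ subS G ↔ M ∈ G := by
  constructor
  · rintro ⟨g, hg, h⟩
    have : g = M := Units.ext h
    exact this ▸ hg
  · intro h; exact ⟨M, h, rfl⟩

end helpers

theorem Emat_eq {R : Type*} [CommRing R] {N : ℕ} (i j : Fin N) (a : R) :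
    Emat R N (i.val + 1) (j.val + 1) a = Tv (Pi.single i a) (Pi.single j 1) := by
  ext r s
  simp only [Emat, Tv, Matrix.add_apply, of_apply, vecMulVec_apply, Pi.single_apply,
    Nat.add_right_cancel_iff, Fin.val_inj]
  by_cases h1 : r = i <;> by_cases h2 : s = j <;> simp [h1, h2]

/-- symplectic analogue, strengthening of Chattopadhyay–Rao:
let `φ` be an invertible alternating `2n × 2n` matrix over a commutative ring `R`
(`n ≥ 2`), written in block form `φ = [[0, -c], [cᵗ, μ]]`, with inverse
`φ⁻¹ = ψ = [[0, d], [-dᵗ, ρ]]`.  For a row vector `v ∈ R^{2n-1}` set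
`α(v) = I + dᵗ·v·μ` and `β(v) = I - ρ·vᵗ·c`.  Then every `α(v)` and `β(v)` is invertible,
and the subgroup of `GL_{2n-1}(R)` generated by all `α(v)` and `β(v)` coincides with the
elementary linear group `E_{2n-1}(R)`. -/
theorem closure_vaserstein_eq_elemGroup_symplectic (R : Type*) [CommRing R]
    (n : ℕ) (hn : 2 ≤ n)
    (c d : Fin (2*n - 1) → R)
    (μ ρ : Matrix (Fin (2*n - 1)) (Fin (2*n - 1)) R)
    (φ ψ : Matrix (Fin 1 ⊕ Fin (2*n - 1)) (Fin 1 ⊕ Fin (2*n - 1)) R)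
    (hφblock : φ = Matrix.fromBlocks 0 (Matrix.of fun _ j => -(c j)) (Matrix.of fun i _ => c i) μ)
    (hφalt : φ.transpose = -φ ∧ ∀ i, φ i i = 0)
    (hψblock : ψ = Matrix.fromBlocks 0 (Matrix.of fun _ j => d j) (Matrix.of fun i _ => -(d i)) ρ)
    (hφinv : φ * ψ = 1 ∧ ψ * φ = 1) :
    (∀ v : Fin (2*n - 1) → R,
      IsUnit ((1 : Matrix (Fin (2*n - 1)) (Fin (2*n - 1)) R) +
        (Matrix.of fun i j => d i * v j) * μ)) ∧
    (∀ v : Fin (2*n - 1) → R,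
      IsUnit ((1 : Matrix (Fin (2*n - 1)) (Fin (2*n - 1)) R) -
        ρ * (Matrix.of fun i j => v i * c j))) ∧
    Subgroup.closure { M : (Matrix (Fin (2*n - 1)) (Fin (2*n - 1)) R)ˣ |
        ∃ v : Fin (2*n - 1) → R,
          M.val = (1 : Matrix (Fin (2*n - 1)) (Fin (2*n - 1)) R) +
            (Matrix.of fun i j => d i * v j) * μ ∨
          M.val = (1 : Matrix (Fin (2*n - 1)) (Fin (2*n - 1)) R) -
            ρ * (Matrix.of fun i j => v i * c j) } =
      elemGroup (2*n - 1) R := by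
  have ec : φ * ψ = 1 := hφinv.1
  have ed : ψ * φ = 1 := hφinv.2
  rw [hφblock, hψblock, fromBlocks_multiply, ← fromBlocks_one, fromBlocks_inj] at ec ed
  obtain ⟨ec1, ec2, ec3, ec4⟩ := ec
  obtain ⟨ed1, ed2, ed3, ed4⟩ := ed
  have hcd : c ⬝ᵥ d = 1 := by
    have := congrFun (congrFun ec1 0) 0
    simpa [Matrix.mul_apply, dotProduct] using this
  have hcρ : c ᵥ* ρ = 0 := by
    ext j
    have := congrFun (congrFun ec2 0) j
    simpa [Matrix.mul_apply, vecMul, dotProduct] using this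
  have hμd : μ *ᵥ d = 0 := by
    ext j
    have := congrFun (congrFun ec3 j) 0
    simpa [Matrix.mul_apply, mulVec, dotProduct] using this
  have hone : vecMulVec d c + ρ * μ = 1 := by
    ext i j
    have := congrFun (congrFun ed4 i) j
    simpa [Matrix.add_apply, Matrix.mul_apply, vecMulVec_apply] using this
  have eα : ∀ v : Fin (2*n - 1) → R, (1 : Matrix (Fin (2*n - 1)) (Fin (2*n - 1)) R) +
        (Matrix.of fun i j => d i * v j) * μ = Tv d (v ᵥ* μ) := by
    intro v
    rw [Tv, ← vecMulVec_mul]; rfl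
  have eβ : ∀ v : Fin (2*n - 1) → R, (1 : Matrix (Fin (2*n - 1)) (Fin (2*n - 1)) R) -
        ρ * (Matrix.of fun i j => v i * c j) = Tv (-(ρ *ᵥ v)) c := by
    intro v
    rw [Tv, neg_vecMulVec, ← mul_vecMulVec, sub_eq_add_neg]; rfl
  have oα : ∀ v : Fin (2*n - 1) → R, (v ᵥ* μ) ⬝ᵥ d = 0 := by
    intro v
    rw [← dotProduct_mulVec, hμd, dotProduct_zero]
  have oβ : ∀ v : Fin (2*n - 1) → R, c ⬝ᵥ (-(ρ *ᵥ v)) = 0 := by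
    intro v
    rw [dotProduct_neg, dotProduct_mulVec, hcρ, zero_dotProduct, neg_zero]
  have h3 : ∀ i j : Fin (2*n - 1), ∃ k, k ≠ i ∧ k ≠ j := by
    intro i j
    have hc : ({i, j} : Finset (Fin (2*n - 1))).card < Fintype.card (Fin (2*n - 1)) := by
      have := Finset.card_le_two (a := i) (b := j)
      rw [Fintype.card_fin]; omega
    obtain ⟨k, hk⟩ := Finset.exists_mem_notMem_of_card_lt_card
      (s := {i, j}) (t := Finset.univ) (by simpa using hc)
    exact ⟨k, by simpa using hk⟩
  simp only [eα, eβ]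
  refine ⟨fun v => Tv_isUnit _ _ (oα v), fun v => Tv_isUnit _ _ (oβ v), le_antisymm ?_ ?_⟩
  · rw [Subgroup.closure_le]
    have hE : HasElem (subS (elemGroup (2*n - 1) R)) := by
      intro i j a hij
      obtain ⟨M, hM⟩ := Tv_isUnit (Pi.single i a : Fin (2*n - 1) → R) (Pi.single j 1)
        (by simp [hij])
      rw [← hM, mem_subS]
      refine Subgroup.subset_closure ⟨i.val + 1, j.val + 1, a, by omega, by omega, by omega,
        by omega, ?_, ?_⟩
      · intro h; exact hij (Fin.ext (by omega))
      · rw [hM, Emat_eq]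
    rintro M ⟨v, hM | hM⟩
    · rw [SetLike.mem_coe, ← mem_subS, hM]
      exact unimod_mem h3 hE _ _ c (oα v) hcd
    · rw [SetLike.mem_coe, ← mem_subS, hM]
      exact unimod_mem' h3 hE _ _ d (oβ v) (by rw [dotProduct_comm]; exact hcd)
  · rw [elemGroup, Subgroup.closure_le]
    rintro M ⟨i, j, a, hi1, hi2, hj1, hj2, hij, hM⟩
    rw [SetLike.mem_coe, ← mem_subS, hM]
    obtain ⟨i', rfl⟩ : ∃ i' : Fin (2*n - 1), i = i'.val + 1 := ⟨⟨i - 1, by omega⟩, by simp; omega⟩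
    obtain ⟨j', rfl⟩ : ∃ j' : Fin (2*n - 1), j = j'.val + 1 := ⟨⟨j - 1, by omega⟩, by simp; omega⟩
    rw [Emat_eq]
    refine HasSplit.hasElem (c := c) (d := d) h3 ⟨hcd, ?_, ?_⟩ i' j' a
      (by rintro rfl; exact hij rfl)
    · intro f hf
      obtain ⟨M, hM⟩ := Tv_isUnit d f hf
      rw [← hM, mem_subS]
      refine Subgroup.subset_closure ⟨f ᵥ* ρ, Or.inl ?_⟩
      have : f ᵥ* (vecMulVec d c + ρ * μ) = f := by rw [hone, vecMul_one]
      rw [vecMul_add, vecMul_vecMulVec, hf, zero_smul, zero_add] at this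
      rw [hM, vecMul_vecMul, this]
    · intro p hp
      obtain ⟨M, hM⟩ := Tv_isUnit p c hp
      rw [← hM, mem_subS]
      refine Subgroup.subset_closure ⟨-(μ *ᵥ p), Or.inr ?_⟩
      have : (vecMulVec d c + ρ * μ) *ᵥ p = p := by rw [hone, one_mulVec]
      rw [add_mulVec, vecMulVec_mulVec, hp] at this
      simp only [MulOpposite.op_zero, zero_smul, zero_add] at this
      rw [hM, mulVec_neg, neg_neg, mulVec_mulVec, this]
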